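/- Let Γ be a group generated by a finite set S and let f be a free p.m.p. action of Γ on a standard Borel probability space (X, μ). Then there exists a p.m.p. action g of Γ on (X, μ) that is weakly equivalent to f and combinatorially rigid: for every r, k ≥ 1 and every (r,k)-rule L, if g almost satisfies L then g properly satisfies L. -/

import Mathlib

open MeasureTheory

/-- A probability-measure-preserving action of a group `G` on a measure space. -/
structure PMP (G : Type*) [Group G] (X : Type*) [MeasurableSpace X] (μ : Measure X) where
  act : G → X → X
  measurable : ∀ γ, Measurable (act γ)
  preserves : ∀ γ, MeasurePreserving (act γ) μ μ
  act_one : ∀ x, act 1 x = x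
  act_mul : ∀ γ₁ γ₂ x, act (γ₁ * γ₂) x = act γ₁ (act γ₂ x)

/-- `f` weakly contains `g`. -/
def WeaklyContains {G : Type*} [Group G] {X Y : Type*} [MeasurableSpace X] [MeasurableSpace Y]
    {μ : Measure X} {ν : Measure Y} (f : PMP G X μ) (g : PMP G Y ν) : Prop :=
  ∀ n : ℕ, 1 ≤ n → ∀ C : Y → Fin n, Measurable C →
    ∀ F : Finset G, ∀ ε : ℝ, 0 < ε →
      ∃ D : X → Fin n, Measurable D ∧
        ∀ i j : Fin n, ∀ γ ∈ F,
          |(μ (f.act γ '' (D ⁻¹' {i}) ∩ D ⁻¹' {j})).toReal -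
            (ν (g.act γ '' (C ⁻¹' {i}) ∩ C ⁻¹' {j})).toReal| ≤ ε

/-- Weak equivalence of p.m.p. actions. -/
def WeaklyEquivalent {G : Type*} [Group G] {X Y : Type*} [MeasurableSpace X] [MeasurableSpace Y]
    {μ : Measure X} {ν : Measure Y} (f : PMP G X μ) (g : PMP G Y ν) : Prop :=
  WeaklyContains f g ∧ WeaklyContains g f

/-- The action `f` is (essentially) free. -/
def IsFreeAction {G : Type*} [Group G] {X : Type*} [MeasurableSpace X] {μ : Measure X}
    (f : PMP G X μ) : Prop :=
  ∀ᵐ x ∂μ, ∀ γ : G, f.act γ x = x → γ = 1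

/-- The ball of radius `r` around the identity in the Cayley graph `Cay(Γ, S)`. -/
def cayleyBall {Γ : Type*} [Group Γ] (S : Finset Γ) (r : ℕ) : Set Γ :=
  {γ | ∃ l : List Γ, l.length ≤ r ∧ (∀ x ∈ l, x ∈ S ∨ x⁻¹ ∈ S) ∧ l.prod = γ}

/-- The `k`-coloring of the `r`-ball around `x` induced by `φ` and the action `f`. -/
def ballColoring {Γ X : Type*} [Group Γ] [MeasurableSpace X] {μ : Measure X}
    (f : PMP Γ X μ) (S : Finset Γ) (r k : ℕ) (φ : X → Fin k) (x : X) :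
    cayleyBall S r → Fin k :=
  fun γ => φ (f.act ↑γ x)

/-- `φ` is an `(ε, L)`-good coloring for the action `f`. -/
def GoodColoring {Γ X : Type*} [Group Γ] [MeasurableSpace X] {μ : Measure X}
    (f : PMP Γ X μ) (S : Finset Γ) {r k : ℕ} (L : Set (cayleyBall S r → Fin k))
    (ε : ℝ) (φ : X → Fin k) : Prop :=
  Measurable φ ∧ 1 - ε ≤ (μ {x | ballColoring f S r k φ x ∈ L}).toReal

/-- The action `f` almost satisfies the rule `L`. -/
def AlmostSatisfies {Γ X : Type*} [Group Γ] [MeasurableSpace X] {μ : Measure X}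
    (f : PMP Γ X μ) (S : Finset Γ) {r k : ℕ} (L : Set (cayleyBall S r → Fin k)) : Prop :=
  ∀ ε : ℝ, 0 < ε → ∃ φ : X → Fin k, GoodColoring f S L ε φ

/-- The action `f` properly satisfies the rule `L`. -/
def ProperlySatisfies {Γ X : Type*} [Group Γ] [MeasurableSpace X] {μ : Measure X}
    (f : PMP Γ X μ) (S : Finset Γ) {r k : ℕ} (L : Set (cayleyBall S r → Fin k)) : Prop :=
  ∃ φ : X → Fin k, Measurable φ ∧ μ {x | ballColoring f S r k φ x ∈ L} = 1

/-!
For uncountable `X`, record with each point `x` its code `ψ x` in the Cantor space together with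
its colours under a sequence `φ n` of better and better solutions of every rule over `Γ` that `f`
almost satisfies. This yields maps `Ψ n` into a compact totally disconnected space `Z`, and the laws
of the itineraries `γ ↦ Ψ n (γ x)` accumulate weakly at a shift-invariant measure `ν` on `Z ^ Γ`.
Events depending on finitely many colours are clopen, so approximate solutions become exact in the
limit, and every coloured pattern of `ν` is approximated by patterns of `f`; on the other hand the
code coordinate is constant along the sequence, so `ν` factors onto `f`. Hence the two actions are
weakly equivalent. Atoms of `μ` persist in `ν`, and atoms of `ν` project to atoms of `μ`, so
`(Z ^ Γ, ν)` is isomorphic to `(X, μ)`. When `X` is countable, `f` itself is rigid, since a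
pointwise limit of approximate solutions along an ultrafilter is exact.
-/

open Set Filter Topology ProbabilityTheory

section StandardMeasureSpaces

variable {α X Y : Type*} [MeasurableSpace X] [MeasurableSpace Y] {μ : Measure X} {ν : Measure Y}

lemma exists_measurePreserving_equiv_of_compl {s : Set X} {t : Set Y}
    (hs : MeasurableSet s) (ht : MeasurableSet t)
    (e : s ≃ᵐ t) (he : MeasurePreserving e (μ.comap (↑)) (ν.comap (↑)))
    (e' : (sᶜ : Set X) ≃ᵐ (tᶜ : Set Y))
    (he' : MeasurePreserving e' (μ.comap (↑)) (ν.comap (↑))) :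
    ∃ E : X ≃ᵐ Y, MeasurePreserving E μ ν := by
  classical
  let E : X ≃ᵐ Y := (MeasurableEquiv.sumCompl hs).symm.trans
    ((MeasurableEquiv.sumCongr e e').trans (MeasurableEquiv.sumCompl ht))
  have hE : E ∘ (↑) = ((↑) : t → Y) ∘ e := funext fun x =>
    congrArg (fun z => MeasurableEquiv.sumCompl ht (MeasurableEquiv.sumCongr e e' z))
      ((MeasurableEquiv.sumCompl hs).symm_apply_eq.2 rfl : _ = Sum.inl x)
  have hE' : E ∘ (↑) = ((↑) : (tᶜ : Set Y) → Y) ∘ e' := funext fun x =>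
    congrArg (fun z => MeasurableEquiv.sumCompl ht (MeasurableEquiv.sumCongr e e' z))
      ((MeasurableEquiv.sumCompl hs).symm_apply_eq.2 rfl : _ = Sum.inr x)
  have map_restrict {s : Set X} {t : Set Y} (hs : MeasurableSet s) (ht : MeasurableSet t)
      {e : s ≃ᵐ t} (he : MeasurePreserving e (μ.comap (↑)) (ν.comap (↑)))
      (hE : E ∘ (↑) = ((↑) : t → Y) ∘ e) : (μ.restrict s).map E = ν.restrict t := by
    rw [← map_comap_subtype_coe hs, Measure.map_map E.measurable measurable_subtype_coe, hE,
      ((measurePreserving_subtype_coe ht).comp he).map_eq]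
  refine ⟨E, E.measurable, ?_⟩
  rw [← Measure.restrict_add_restrict_compl (μ := μ) hs, Measure.map_add _ _ E.measurable,
    map_restrict hs ht he hE, map_restrict hs.compl ht.compl he' hE',
    Measure.restrict_add_restrict_compl ht]

lemma uncountable_compl [Uncountable α] {s : Set α} (hs : s.Countable) : Uncountable ↑sᶜ :=
  not_countable_iff.1 fun h => not_countable_univ (union_compl_self s ▸ hs.union h.to_set)

lemma comap_subtype_coe_eq_zero {s : Set X} (hs : MeasurableSet s) (h : μ s = 0) :
    μ.comap ((↑) : s → X) = 0 := by
  rw [← Measure.measure_univ_eq_zero, comap_subtype_coe_apply hs, image_univ, Subtype.range_coe, h]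

lemma nullSingletonClass_map_equiv [NullSingletonClass μ] (e : X ≃ᵐ Y) :
    NullSingletonClass (μ.map e) :=
  ⟨fun y => by rw [e.map_apply, ← e.image_symm, image_singleton, measure_singleton]⟩

lemma nullSingletonClass_comap_subtype_coe {s : Set X} (hs : MeasurableSet s)
    (h : ∀ x ∈ s, μ {x} = 0) : NullSingletonClass (μ.comap ((↑) : s → X)) :=
  ⟨fun x => by rw [comap_subtype_coe_apply hs, image_singleton, h x x.2]⟩

lemma exists_measurePreserving_equiv_of_countable [MeasurableSingletonClass X]
    [MeasurableSingletonClass Y] {s : Set X} {t : Set Y} (hs : s.Countable) (ht : t.Countable)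
    (σ : s ≃ t) (hσ : ∀ x, ν {(σ x : Y)} = μ {(x : X)}) :
    ∃ e : s ≃ᵐ t, MeasurePreserving e (μ.comap (↑)) (ν.comap (↑)) := by
  have := hs.to_subtype
  have := ht.to_subtype
  refine ⟨⟨σ, measurable_of_countable _, measurable_of_countable _⟩, measurable_of_countable _,
    Measure.ext_of_singleton fun y => ?_⟩
  obtain ⟨x, rfl⟩ := σ.surjective y
  have hpre : σ ⁻¹' {σ x} = {x} := by rw [← image_singleton, preimage_image_eq _ σ.injective]
  rw [Measure.map_apply (measurable_of_countable _) (measurableSet_singleton _),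
    comap_subtype_coe_apply hs.measurableSet, comap_subtype_coe_apply ht.measurableSet,
    image_singleton, hσ, MeasurableEquiv.coe_mk, hpre, image_singleton]

lemma countable_setOf_measure_singleton_ne_zero [MeasurableSingletonClass X] (μ : Measure X)
    [SFinite μ] : {x | μ {x} ≠ 0}.Countable := by
  simpa only [pos_iff_ne_zero] using Measure.countable_meas_pos_of_disjoint_iUnion (μ := μ)
    measurableSet_singleton fun _ _ hxy => disjoint_singleton.2 hxy

variable [StandardBorelSpace X] [StandardBorelSpace Y]

lemma exists_measurePreserving_equiv_of_embedding {i : X → Y} (hi : MeasurableEmbedding i)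
    (hmp : MeasurePreserving i μ ν) {s : Set X} (hs : MeasurableSet s) (hnull : μ sᶜ = 0)
    (hunc : ¬ sᶜ.Countable) : ∃ e : X ≃ᵐ Y, MeasurePreserving e μ ν := by
  have ht : MeasurableSet (i '' s) := hi.measurableSet_image.2 hs
  have hμν {u : Set X} (hu : MeasurableSet u) : ν (i '' u) = μ u := by
    rw [← hmp.measure_preimage (hi.measurableSet_image.2 hu).nullMeasurableSet,
      preimage_image_eq _ hi.injective]
  have hnull' : ν (i '' s)ᶜ = 0 := by
    rw [← hmp.measure_preimage ht.compl.nullMeasurableSet, preimage_compl,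
      preimage_image_eq _ hi.injective, hnull]
  have hunc' : ¬ ((i '' s)ᶜ).Countable := fun h =>
    hunc (countable_of_injective_of_countable_image hi.injective.injOn
      (h.mono (image_compl_subset hi.injective)))
  have := hs.compl.standardBorel
  have := ht.compl.standardBorel
  let e' : (sᶜ : Set X) ≃ᵐ ((i '' s)ᶜ : Set Y) :=
    PolishSpace.measurableEquivOfNotCountable hunc hunc'
  refine exists_measurePreserving_equiv_of_compl hs ht (hi.equivImage s)
    ⟨(hi.equivImage s).measurable, Measure.ext fun u hu => ?_⟩ e' ⟨e'.measurable, ?_⟩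
  · have himage : ((↑) : i '' s → Y) '' u = i '' ((↑) '' (hi.equivImage s ⁻¹' u)) := by
      rw [← image_comp, show i ∘ (↑) = ((↑) : i '' s → Y) ∘ hi.equivImage s from rfl, image_comp,
        image_preimage_eq _ (hi.equivImage s).surjective]
    rw [(hi.equivImage s).map_apply, comap_subtype_coe_apply hs, comap_subtype_coe_apply ht,
      himage, hμν (hs.subtype_image ((hi.equivImage s).measurable hu))]
  · rw [comap_subtype_coe_eq_zero hs.compl hnull, comap_subtype_coe_eq_zero ht.compl hnull',
      Measure.map_zero]

lemma exists_measure_eq_zero_not_countable [Uncountable X] (μ : Measure X) [SFinite μ] :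
    ∃ s : Set X, MeasurableSet s ∧ μ s = 0 ∧ ¬ s.Countable := by
  have hplane : Uncountable (ℝ × ℝ) := inferInstance
  let e : X ≃ᵐ ℝ × ℝ := PolishSpace.measurableEquivOfNotCountable
    (not_countable_iff.2 inferInstance) (not_countable_iff.2 hplane)
  let line (a : ℝ) : Set X := {x | (e x).1 = a}
  have line_meas (a : ℝ) : MeasurableSet (line a) :=
    (measurable_fst.comp e.measurable) (measurableSet_singleton a)
  have line_disjoint : Pairwise (Function.onFun Disjoint line) := fun a b hab =>
    Set.disjoint_left.2 fun x hxa hxb => hab (hxa.symm.trans hxb)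
  obtain ⟨a, ha⟩ : ∃ a, a ∉ {a | 0 < μ (line a)} := by
    by_contra! h
    exact not_countable_univ (eq_univ_of_forall h ▸
      Measure.countable_meas_pos_of_disjoint_iUnion line_meas line_disjoint)
  refine ⟨line a, line_meas a, by simpa using ha, fun hcount => ?_⟩
  have hsurj : (fun x => (e x).2) '' line a = univ :=
    eq_univ_of_forall fun y => ⟨e.symm (a, y), by simp [line], by simp⟩
  exact not_countable_univ (hsurj ▸ hcount.image _)

lemma continuous_cdf (μ : Measure ℝ) [IsProbabilityMeasure μ] [NullSingletonClass μ] :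
    Continuous (cdf μ) := by
  refine continuous_iff_continuousAt.2 fun a => ?_
  rw [(monotone_cdf μ).continuousAt_iff_leftLim_eq_rightLim, (cdf μ).rightLim_eq]
  have hjump := (cdf μ).measure_singleton a
  rw [measure_cdf, measure_singleton, eq_comm, ENNReal.ofReal_eq_zero] at hjump
  exact le_antisymm ((monotone_cdf μ).leftLim_le le_rfl) (by linarith)

attribute [local instance] Measure.Subtype.measureSpace

lemma isProbabilityMeasure_volume_Ioo :
    IsProbabilityMeasure (volume : Measure (Ioo (0 : ℝ) 1)) :=
  ⟨by rw [Measure.Subtype.volume_univ measurableSet_Ioo.nullMeasurableSet]; simp⟩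

lemma measurePreserving_volume_Ioo_of_cdf_comp (μ : Measure ℝ) [IsProbabilityMeasure μ]
    {Q : Ioo (0 : ℝ) 1 → ℝ} (hQ : Measurable Q) (hcdf : ∀ t, cdf μ (Q t) = t) :
    MeasurePreserving Q volume μ := by
  have := isProbabilityMeasure_volume_Ioo
  have := Measure.isFiniteMeasure_map (volume : Measure (Ioo (0 : ℝ) 1)) Q
  refine ⟨hQ, Measure.ext_of_Iic _ _ fun x => ?_⟩
  rw [Measure.map_apply hQ measurableSet_Iic, Measure.Subtype.volume_def,
    comap_subtype_coe_apply measurableSet_Ioo, ← ofReal_cdf μ x]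
  apply le_antisymm
  · calc volume (Subtype.val '' (Q ⁻¹' Iic x)) ≤ volume (Icc 0 (cdf μ x)) := by
          refine measure_mono ?_
          rintro _ ⟨t, ht, rfl⟩
          exact ⟨t.2.1.le, hcdf t ▸ monotone_cdf μ ht⟩
      _ = ENNReal.ofReal (cdf μ x) := by simp
  · calc ENNReal.ofReal (cdf μ x) = volume (Ioo 0 (cdf μ x)) := by simp
      _ ≤ volume (Subtype.val '' (Q ⁻¹' Iic x)) := by
          refine measure_mono fun t ht => ?_
          let t' : Ioo (0 : ℝ) 1 := ⟨t, ht.1, ht.2.trans_le (cdf_le_one μ x)⟩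
          have hlt : cdf μ (Q t') < cdf μ x := (hcdf t').symm ▸ ht.2
          exact ⟨t', ((monotone_cdf μ).reflect_lt hlt).le, rfl⟩

-- `Q` is a quantile function of `μ`.
lemma exists_measurableEmbedding_measurePreserving_volume_Ioo (μ : Measure ℝ)
    [IsProbabilityMeasure μ] [NullSingletonClass μ] :
    ∃ Q : Ioo (0 : ℝ) 1 → ℝ, MeasurableEmbedding Q ∧ MeasurePreserving Q volume μ := by
  have cdf_surj (t : Ioo (0 : ℝ) 1) : ∃ x, cdf μ x = t := by
    obtain ⟨a, ha⟩ := ((tendsto_cdf_atBot μ).eventually_lt_const t.2.1).exists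
    obtain ⟨b, hb⟩ := ((tendsto_cdf_atTop μ).eventually_const_lt t.2.2).exists
    exact mem_range_of_exists_le_of_exists_ge (continuous_cdf μ) ⟨a, ha.le⟩ ⟨b, hb.le⟩
  choose Q hQ using cdf_surj
  have hmono : StrictMono Q := fun s t hst =>
    (monotone_cdf μ).reflect_lt (by rw [hQ, hQ]; exact hst)
  have hmeas : Measurable Q := hmono.monotone.measurable
  have := (measurableSet_Ioo (a := (0 : ℝ)) (b := 1)).standardBorel
  exact ⟨Q, hmeas.measurableEmbedding hmono.injective,
    measurePreserving_volume_Ioo_of_cdf_comp μ hmeas hQ⟩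

lemma exists_measurePreserving_equiv_volume_Ioo [Uncountable X] (μ : Measure X)
    [IsProbabilityMeasure μ] [NullSingletonClass μ] :
    ∃ e : Ioo (0 : ℝ) 1 ≃ᵐ X, MeasurePreserving e volume μ := by
  let j : X ≃ᵐ ℝ := PolishSpace.measurableEquivOfNotCountable
    (not_countable_iff.2 inferInstance) (not_countable_iff.2 inferInstance)
  have hj : MeasurePreserving j μ (μ.map j) := ⟨j.measurable, rfl⟩
  have := Measure.isProbabilityMeasure_map (μ := μ) j.measurable.aemeasurable
  have := nullSingletonClass_map_equiv (μ := μ) j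
  have := isProbabilityMeasure_volume_Ioo
  have := (measurableSet_Ioo (a := (0 : ℝ)) (b := 1)).standardBorel
  have : Uncountable (Ioo (0 : ℝ) 1) := not_countable_iff.1 fun h =>
    (Cardinal.Real.Ioo_countable_iff.1 h.to_set).not_gt one_pos
  obtain ⟨Q, hQ, hQm⟩ := exists_measurableEmbedding_measurePreserving_volume_Ioo (μ.map j)
  obtain ⟨s, hs, hs0, hsc⟩ :=
    exists_measure_eq_zero_not_countable (volume : Measure (Ioo (0 : ℝ) 1))
  obtain ⟨e, he⟩ := exists_measurePreserving_equiv_of_embedding hQ hQm hs.compl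
    (by rwa [compl_compl]) (by rwa [compl_compl])
  exact ⟨e.trans j.symm, (hj.symm j).comp he⟩

lemma exists_measurePreserving_equiv_of_isProbabilityMeasure [Uncountable X] [Uncountable Y]
    (μ : Measure X) (ν : Measure Y) [IsProbabilityMeasure μ] [IsProbabilityMeasure ν]
    [NullSingletonClass μ] [NullSingletonClass ν] : ∃ e : X ≃ᵐ Y, MeasurePreserving e μ ν := by
  obtain ⟨a, ha⟩ := exists_measurePreserving_equiv_volume_Ioo μ
  obtain ⟨b, hb⟩ := exists_measurePreserving_equiv_volume_Ioo ν
  exact ⟨a.symm.trans b, hb.comp (ha.symm a)⟩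

lemma exists_measurePreserving_equiv_of_measure_univ_eq [Uncountable X] [Uncountable Y]
    (μ : Measure X) (ν : Measure Y) [IsFiniteMeasure μ]
    [NullSingletonClass μ] [NullSingletonClass ν] (h : μ univ = ν univ) :
    ∃ e : X ≃ᵐ Y, MeasurePreserving e μ ν := by
  rcases eq_or_ne μ 0 with rfl | hμ
  · have hν : ν = 0 := by rw [← Measure.measure_univ_eq_zero, ← h, Measure.coe_zero, Pi.zero_apply]
    let e : X ≃ᵐ Y := PolishSpace.measurableEquivOfNotCountable
      (not_countable_iff.2 inferInstance) (not_countable_iff.2 inferInstance)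
    exact ⟨e, e.measurable, by rw [hν, Measure.map_zero]⟩
  · have hμ' : NeZero μ := ⟨hμ⟩
    have hne : μ univ ≠ 0 := by simpa using hμ
    have htop : μ univ ≠ ⊤ := measure_ne_top μ univ
    have hνp : IsProbabilityMeasure ((μ univ)⁻¹ • ν) :=
      ⟨by rw [Measure.smul_apply, ← h, smul_eq_mul, ENNReal.inv_mul_cancel hne htop]⟩
    have hμn : NullSingletonClass ((μ univ)⁻¹ • μ) := ⟨fun x => by simp⟩
    have hνn : NullSingletonClass ((μ univ)⁻¹ • ν) := ⟨fun x => by simp⟩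
    obtain ⟨e, he⟩ := exists_measurePreserving_equiv_of_isProbabilityMeasure
      ((μ univ)⁻¹ • μ) ((μ univ)⁻¹ • ν)
    have := he.smul_measure (μ univ)
    rw [smul_smul, smul_smul, ENNReal.mul_inv_cancel hne htop, one_smul, one_smul] at this
    exact ⟨e, this⟩

theorem exists_measurePreserving_equiv_of_bijOn_atoms [Uncountable X] [Uncountable Y]
    [IsFiniteMeasure μ] [IsFiniteMeasure ν] (huniv : μ univ = ν univ) {σ : X → Y}
    (hσ : BijOn σ {x | μ {x} ≠ 0} {y | ν {y} ≠ 0}) (hμν : ∀ x, μ {x} ≠ 0 → ν {σ x} = μ {x}) :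
    ∃ e : X ≃ᵐ Y, MeasurePreserving e μ ν := by
  have hs := countable_setOf_measure_singleton_ne_zero μ
  have ht := countable_setOf_measure_singleton_ne_zero ν
  obtain ⟨e, he⟩ :=
    exists_measurePreserving_equiv_of_countable hs ht (hσ.equiv σ) fun x => hμν x x.2
  have := uncountable_compl hs
  have := uncountable_compl ht
  have := hs.measurableSet.compl.standardBorel
  have := ht.measurableSet.compl.standardBorel
  have := nullSingletonClass_comap_subtype_coe hs.measurableSet.compl (fun _ => not_not.1)
  have := nullSingletonClass_comap_subtype_coe ht.measurableSet.compl (fun _ => not_not.1)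
  have hcompl : μ.comap ((↑) : ({x | μ {x} ≠ 0}ᶜ : Set X) → X) univ =
      ν.comap ((↑) : ({y | ν {y} ≠ 0}ᶜ : Set Y) → Y) univ := by
    have hatoms := he.measure_preimage MeasurableSet.univ.nullMeasurableSet
    rw [preimage_univ, comap_subtype_coe_apply hs.measurableSet,
      comap_subtype_coe_apply ht.measurableSet, Subtype.coe_image_univ, Subtype.coe_image_univ]
      at hatoms
    rw [comap_subtype_coe_apply hs.measurableSet.compl,
      comap_subtype_coe_apply ht.measurableSet.compl, Subtype.coe_image_univ,
      Subtype.coe_image_univ, measure_compl hs.measurableSet (measure_ne_top _ _),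
      measure_compl ht.measurableSet (measure_ne_top _ _), huniv, hatoms]
  obtain ⟨e', he'⟩ := exists_measurePreserving_equiv_of_measure_univ_eq _ _ hcompl
  exact exists_measurePreserving_equiv_of_compl hs.measurableSet ht.measurableSet e he e' he'

theorem exists_measurePreserving_equiv_of_forall_atom_lift [Uncountable X] [Uncountable Y]
    [IsFiniteMeasure μ] [IsFiniteMeasure ν] {p : Y → X} (hp : MeasurePreserving p ν μ)
    (hlift : ∀ x, μ {x} ≠ 0 → ∃ y, p y = x ∧ μ {x} ≤ ν {y}) :
    ∃ e : X ≃ᵐ Y, MeasurePreserving e μ ν := by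
  have fiber_measure (x : X) : ν (p ⁻¹' {x}) = μ {x} :=
    hp.measure_preimage (measurableSet_singleton x).nullMeasurableSet
  have singleton_le (y : Y) : ν {y} ≤ μ {p y} := by
    rw [← fiber_measure]
    exact measure_mono (singleton_subset_iff.2 rfl)
  choose! σ hpσ hσ using hlift
  refine exists_measurePreserving_equiv_of_bijOn_atoms (σ := σ) ?_
    ⟨fun x hx => ((pos_iff_ne_zero.2 hx).trans_le (hσ x hx)).ne', fun x hx y hy h => by
      rw [← hpσ x hx, ← hpσ y hy, h], fun y hy => ?_⟩
    fun x hx => ((singleton_le (σ x)).trans_eq (by rw [hpσ x hx])).antisymm (hσ x hx)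
  · rw [← hp.measure_preimage MeasurableSet.univ.nullMeasurableSet, preimage_univ]
  · have hx : μ {p y} ≠ 0 := ((pos_iff_ne_zero.2 hy).trans_le (singleton_le y)).ne'
    refine ⟨p y, hx, by_contra fun hne => hy ?_⟩
    have hadd : μ {p y} + ν {y} ≤ μ {p y} + 0 := calc
      μ {p y} + ν {y} ≤ ν {σ (p y)} + ν {y} := by gcongr; exact hσ _ hx
      _ = ν ({σ (p y)} ∪ {y}) :=
        (measure_union (disjoint_singleton.2 hne) (measurableSet_singleton y)).symm
      _ ≤ ν (p ⁻¹' {p y}) :=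
        measure_mono (union_subset (singleton_subset_iff.2 (hpσ _ hx)) (singleton_subset_iff.2 rfl))
      _ = μ {p y} + 0 := by rw [fiber_measure, add_zero]
    exact le_zero_iff.1 ((ENNReal.add_le_add_iff_left (measure_ne_top _ _)).1 hadd)

end StandardMeasureSpaces

section Actions

lemma measurableSet_domRestrict_preimage {ι : Type*} {F : Set ι} (hF : F.Finite) {n : ℕ}
    (E : Set (F → Fin n)) : MeasurableSet (F.domRestrict ⁻¹' E : Set (ι → Fin n)) :=
  have := hF.to_subtype
  Set.measurable_restrict F E.toFinite.measurableSet

lemma finite_cayleyBall {Γ : Type*} [Group Γ] (S : Finset Γ) (r : ℕ) : (cayleyBall S r).Finite := by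
  have := (S.finite_toSet.union S.finite_toSet.inv).to_subtype
  refine ((List.finite_length_le (S ∪ (S : Set Γ)⁻¹ : Set Γ) r).image
    fun l => (l.map (↑)).prod).subset ?_
  rintro _ ⟨l, hlr, hlS, rfl⟩
  lift l to List (S ∪ (S : Set Γ)⁻¹ : Set Γ) using hlS
  exact ⟨l, by simpa using hlr, rfl⟩

variable {Γ X Y W α : Type*} [Group Γ] [MeasurableSpace X] [MeasurableSpace Y] [MeasurableSpace W]
  {μ : Measure X} {ν : Measure Y} {ω : Measure W}

namespace PMP

lemma act_inv_act (f : PMP Γ X μ) (γ : Γ) (x : X) : f.act γ⁻¹ (f.act γ x) = x := by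
  rw [← f.act_mul, inv_mul_cancel, f.act_one]

lemma act_act_inv (f : PMP Γ X μ) (γ : Γ) (x : X) : f.act γ (f.act γ⁻¹ x) = x := by
  rw [← f.act_mul, mul_inv_cancel, f.act_one]

/-- The itinerary of `x` records the colours, under `C`, that the orbit of `x` visits. -/
def itinerary (f : PMP Γ X μ) (C : X → α) (x : X) : Γ → α := fun γ => C (f.act γ x)

lemma measurable_itinerary [MeasurableSpace α] (f : PMP Γ X μ) {C : X → α} (hC : Measurable C) :
    Measurable (f.itinerary C) :=
  measurable_pi_lambda _ fun γ => hC.comp (f.measurable γ)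

/-- The conjugate of an action on `Y` by an isomorphism of measure spaces `X ≃ Y`. -/
def transport (g : PMP Γ Y ν) (e : X ≃ᵐ Y) (he : MeasurePreserving e μ ν) : PMP Γ X μ where
  act γ x := e.symm (g.act γ (e x))
  measurable γ := e.symm.measurable.comp ((g.measurable γ).comp e.measurable)
  preserves γ := (he.symm e).comp ((g.preserves γ).comp he)
  act_one x := by rw [g.act_one, e.symm_apply_apply]
  act_mul γ₁ γ₂ x := by rw [g.act_mul, e.apply_symm_apply]

lemma image_preimage_inter_preimage (f : PMP Γ X μ) (C : X → α) (γ : Γ) (a b : α) :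
    f.act γ '' (C ⁻¹' {a}) ∩ C ⁻¹' {b} =
      {x | f.itinerary C x γ⁻¹ = a ∧ f.itinerary C x 1 = b} := by
  ext x
  simp only [itinerary, f.act_one]
  refine and_congr_left fun _ => ⟨?_, fun hx => ⟨_, hx, f.act_act_inv γ x⟩⟩
  rintro ⟨y, hy, rfl⟩
  rwa [f.act_inv_act]

end PMP

lemma WeaklyContains.refl (f : PMP Γ X μ) : WeaklyContains f f :=
  fun _ _ C hC _ _ hε => ⟨C, hC, fun _ _ _ _ => by simpa using hε.le⟩

/-- Weak containment in its strong form: for every colouring `C` of the space of `g`, the joint law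
of finitely many entries of the `C`-itinerary is a limit, in total variation, of laws arising in
the same way from `f`. -/
def ApproximatesItineraries (f : PMP Γ X μ) (g : PMP Γ Y ν) : Prop :=
  ∀ (n : ℕ) (C : Y → Fin n), Measurable C → ∀ F : Set Γ, F.Finite → ∀ ε : ℝ, 0 < ε →
    ∃ D : X → Fin n, Measurable D ∧ ∀ E : Set (F → Fin n),
      |μ.real (f.itinerary D ⁻¹' (F.domRestrict ⁻¹' E)) -
        ν.real (g.itinerary C ⁻¹' (F.domRestrict ⁻¹' E))| ≤ ε

namespace ApproximatesItineraries

variable {f : PMP Γ X μ} {g : PMP Γ Y ν} {h : PMP Γ W ω}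

lemma trans (hfg : ApproximatesItineraries f g) (hgh : ApproximatesItineraries g h) :
    ApproximatesItineraries f h := by
  intro n C hC F hF ε hε
  obtain ⟨C', hC', hCC'⟩ := hgh n C hC F hF (ε / 2) (half_pos hε)
  obtain ⟨D, hD, hDC'⟩ := hfg n C' hC' F hF (ε / 2) (half_pos hε)
  exact ⟨D, hD, fun E => (abs_sub_le _ _ _).trans <|
    (add_le_add (hDC' E) (hCC' E)).trans_eq (add_halves ε)⟩

lemma weaklyContains (hfg : ApproximatesItineraries f g) : WeaklyContains f g := by
  intro n _ C hC F ε hε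
  obtain ⟨D, hD, hDC⟩ := hfg n C hC (insert 1 (F : Set Γ)⁻¹) (F.finite_toSet.inv.insert 1) ε hε
  refine ⟨D, hD, fun i j γ hγ => ?_⟩
  rw [f.image_preimage_inter_preimage, g.image_preimage_inter_preimage]
  exact hDC {c | c ⟨γ⁻¹, mem_insert_of_mem _ (Set.inv_mem_inv.2 hγ)⟩ = i ∧
    c ⟨1, mem_insert _ _⟩ = j}

lemma almostSatisfies (hfg : ApproximatesItineraries f g) {S : Finset Γ} {r k : ℕ}
    {L : Set (cayleyBall S r → Fin k)} (hL : AlmostSatisfies g S L) : AlmostSatisfies f S L := by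
  intro ε hε
  obtain ⟨φ, hφ, hφL⟩ := hL (ε / 2) (half_pos hε)
  obtain ⟨D, hD, hDφ⟩ := hfg k φ hφ (cayleyBall S r) (finite_cayleyBall S r) (ε / 2) (half_pos hε)
  have hDφL : _ ≤ _ := (abs_le.1 (hDφ L)).1
  refine ⟨D, hD, ?_⟩
  change 1 - ε ≤ μ.real (f.itinerary D ⁻¹' ((cayleyBall S r).domRestrict ⁻¹' L))
  change 1 - ε / 2 ≤ ν.real (g.itinerary φ ⁻¹' ((cayleyBall S r).domRestrict ⁻¹' L)) at hφL
  linarith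

end ApproximatesItineraries

/-- A measure preserving map `p` between the spaces of `g` and `f` that intertwines the actions
almost everywhere, exhibiting `f` as a factor of `g`. -/
structure IsFactorMap (g : PMP Γ Y ν) (f : PMP Γ X μ) (p : Y → X) : Prop where
  measurePreserving : MeasurePreserving p ν μ
  ae_equivariant : ∀ᵐ y ∂ν, ∀ γ, p (g.act γ y) = f.act γ (p y)

namespace PMP

lemma isFactorMap_transport (g : PMP Γ Y ν) (e : X ≃ᵐ Y) (he : MeasurePreserving e μ ν) :
    IsFactorMap (g.transport e he) g e :=
  ⟨he, ae_of_all _ fun _ _ => e.apply_symm_apply _⟩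

lemma isFactorMap_transport_symm (g : PMP Γ Y ν) (e : X ≃ᵐ Y) (he : MeasurePreserving e μ ν) :
    IsFactorMap g (g.transport e he) e.symm :=
  ⟨he.symm e, ae_of_all _ fun _ _ => by simp only [transport, e.apply_symm_apply]⟩

end PMP

namespace IsFactorMap

variable {f : PMP Γ X μ} {g : PMP Γ Y ν} {p : Y → X}

lemma measure_itinerary_preimage [MeasurableSpace α] (hp : IsFactorMap g f p) {C : X → α}
    (hC : Measurable C) {E : Set (Γ → α)} (hE : MeasurableSet E) :
    ν (g.itinerary (C ∘ p) ⁻¹' E) = μ (f.itinerary C ⁻¹' E) := by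
  rw [← hp.measurePreserving.measure_preimage (f.measurable_itinerary hC hE).nullMeasurableSet]
  refine measure_congr ?_
  filter_upwards [hp.ae_equivariant] with y hy
  have hitinerary : g.itinerary (C ∘ p) y = f.itinerary C (p y) :=
    funext fun γ => congrArg C (hy γ)
  exact congrArg E hitinerary

lemma approximatesItineraries (hp : IsFactorMap g f p) : ApproximatesItineraries g f := by
  intro n C hC F hF ε hε
  refine ⟨C ∘ p, hC.comp hp.measurePreserving.measurable, fun E => ?_⟩
  rw [measureReal_def, hp.measure_itinerary_preimage hC (measurableSet_domRestrict_preimage hF E),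
    measureReal_def, sub_self, abs_zero]
  exact hε.le

lemma properlySatisfies (hp : IsFactorMap g f p) {S : Finset Γ} {r k : ℕ}
    {L : Set (cayleyBall S r → Fin k)} (hL : ProperlySatisfies f S L) :
    ProperlySatisfies g S L := by
  obtain ⟨φ, hφ, hφL⟩ := hL
  exact ⟨φ ∘ p, hφ.comp hp.measurePreserving.measurable, (hp.measure_itinerary_preimage hφ
    (measurableSet_domRestrict_preimage (finite_cayleyBall S r) L)).trans hφL⟩

end IsFactorMap

lemma AlmostSatisfies.exists_seq_tendsto [IsProbabilityMeasure μ] {f : PMP Γ X μ} {S : Finset Γ}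
    {r k : ℕ} {L : Set (cayleyBall S r → Fin k)} (hL : AlmostSatisfies f S L) :
    ∃ φ : ℕ → X → Fin k, (∀ n, Measurable (φ n)) ∧
      Tendsto (fun n => μ.real {x | ballColoring f S r k (φ n) x ∈ L}) atTop (𝓝 1) := by
  choose φ hφ hφL using fun n : ℕ => hL (1 / (n + 1)) Nat.one_div_pos_of_nat
  refine ⟨φ, hφ, tendsto_of_tendsto_of_tendsto_of_le_of_le ?_ tendsto_const_nhds hφL
    fun n => measureReal_le_one⟩
  simpa using tendsto_one_div_add_atTop_nhds_zero_nat.const_sub (1 : ℝ)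

/-- Every rule over `S` that `f` almost satisfies is properly satisfied by `f`. -/
def IsCombinatoriallyRigid (f : PMP Γ X μ) (S : Finset Γ) : Prop :=
  ∀ (r k : ℕ) (L : Set (cayleyBall S r → Fin k)), AlmostSatisfies f S L → ProperlySatisfies f S L

theorem isCombinatoriallyRigid_of_countable [Countable X] [MeasurableSingletonClass X]
    [IsProbabilityMeasure μ] (f : PMP Γ X μ) (S : Finset Γ) : IsCombinatoriallyRigid f S := by
  intro r k L hL
  have := (finite_cayleyBall S r).to_subtype
  choose φ hφ using fun n : ℕ => hL (1 / (n + 1)) Nat.one_div_pos_of_nat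
  let good (n : ℕ) : Set X := {x | ballColoring f S r k (φ n) x ∈ L}
  have hbad (n : ℕ) : μ.real (good n)ᶜ ≤ 1 / (n + 1) := by
    rw [probReal_compl_eq_one_sub (to_countable _).measurableSet]
    exact sub_le_comm.1 (hφ n).2
  choose Φ hΦ using fun x =>
    Ultrafilter.eventually_exists_iff.1 (.of_forall fun n => ⟨φ n x, rfl⟩ :
      ∀ᶠ n in hyperfilter ℕ, ∃ a, φ n x = a)
  refine ⟨Φ, measurable_of_countable Φ, (mem_ae_iff_prob_eq_one (to_countable _).measurableSet).1 <|
    ae_iff_of_countable.2 fun x hx => ?_⟩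
  have hlimit : ∀ᶠ n in hyperfilter ℕ, ballColoring f S r k (φ n) x = ballColoring f S r k Φ x :=
    (eventually_all.2 fun γ : cayleyBall S r => hΦ (f.act γ x)).mono fun _ => funext
  have hgood : ∀ᶠ n in hyperfilter ℕ, x ∈ good n := by
    have hx' : 0 < μ.real {x} := ENNReal.toReal_pos hx (measure_ne_top _ _)
    filter_upwards [Nat.hyperfilter_le_atTop
      (tendsto_one_div_add_atTop_nhds_zero_nat.eventually_lt_const hx')] with n hn
    by_contra hxn
    exact ((measureReal_mono (singleton_subset_iff.2 hxn)).trans (hbad n)).not_gt hn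
  obtain ⟨n, hn, hn'⟩ := (hlimit.and hgood).exists
  exact hn ▸ hn'

end Actions

section ClopenApproximation

variable {K : Type*} [TopologicalSpace K] [CompactSpace K] [T2Space K] [TotallyDisconnectedSpace K]
  [SecondCountableTopology K] [MeasurableSpace K] [BorelSpace K] (ν : Measure K) [IsFiniteMeasure ν]
  {ε : ℝ}

lemma exists_isClopen_measureReal_symmDiff_le {s : Set K} (hs : MeasurableSet s) (hε : 0 < ε) :
    ∃ t, IsClopen t ∧ ν.real (symmDiff t s) ≤ ε := by
  obtain ⟨t, ht, hts⟩ := exists_measure_symmDiff_lt_of_generateFrom_isSetRing (μ := ν)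
    (C := {s : Set K | IsClopen s})
    ⟨isClopen_empty, fun _ _ => IsClopen.union, fun _ _ => IsClopen.diff⟩
    ⟨{univ}, countable_singleton _, singleton_subset_iff.2 isClopen_univ, by simp⟩
    (BorelSpace.measurable_eq.trans isTopologicalBasis_isClopen.borel_eq_generateFrom) hs
    (ENNReal.ofReal_pos.2 hε)
  exact ⟨t, ht, ENNReal.toReal_le_of_le_ofReal hε.le hts.le⟩

lemma exists_continuous_measureReal_ne_le {n : ℕ} {C : K → Fin n} (hC : Measurable C)
    (hε : 0 < ε) : ∃ C' : K → Fin n, Continuous C' ∧ ν.real {y | C' y ≠ C y} ≤ ε := by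
  rcases isEmpty_or_nonempty K with hK | ⟨⟨y₀⟩⟩
  · exact ⟨C, continuous_of_discreteTopology, by simpa using hε.le⟩
  have hn : 0 < (n : ℝ) := Nat.cast_pos.2 (C y₀).pos
  have : Nonempty (Fin n) := ⟨C y₀⟩
  choose A hA hAC using fun i : Fin n =>
    exists_isClopen_measureReal_symmDiff_le ν (hC (measurableSet_singleton i)) (div_pos hε hn)
  let oneHot (a i : Fin n) : Bool := ({i} : Set (Fin n)).boolIndicator a
  have honeHot : Function.Injective oneHot := fun a b hab => by
    have := congrFun hab b
    simpa [oneHot, boolIndicator] using this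
  let code (y : K) (i : Fin n) : Bool := (A i).boolIndicator y
  have hcode : Continuous code :=
    continuous_pi fun i => (continuous_boolIndicator_iff_isClopen (A i)).2 (hA i)
  have code_eq {y : K} (hy : y ∉ ⋃ i, symmDiff (A i) (C ⁻¹' {i})) : code y = oneHot (C y) := by
    ext i
    have hyi : y ∉ symmDiff (A i) (C ⁻¹' {i}) := fun h => hy (mem_iUnion.2 ⟨i, h⟩)
    have hiff : y ∈ A i ↔ C y ∈ ({i} : Set (Fin n)) := by
      rw [mem_symmDiff] at hyi
      tauto
    simp [code, oneHot, boolIndicator, hiff]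
  refine ⟨Function.invFun oneHot ∘ code, continuous_of_discreteTopology.comp hcode, ?_⟩
  calc ν.real {y | (Function.invFun oneHot ∘ code) y ≠ C y}
      ≤ ν.real (⋃ i, symmDiff (A i) (C ⁻¹' {i})) := by
        refine measureReal_mono fun y hy => by_contra fun hy' => hy ?_
        rw [Function.comp_apply, code_eq hy', Function.leftInverse_invFun honeHot]
    _ ≤ ∑ i, ν.real (symmDiff (A i) (C ⁻¹' {i})) := measureReal_iUnion_fintype_le _
    _ ≤ ∑ _i : Fin n, ε / n := Finset.sum_le_sum fun i _ => hAC i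
    _ = ε := by simp [mul_div_cancel₀ _ hn.ne']

end ClopenApproximation

section ShiftLimits

lemma exists_tendsto_of_ultrafilter {ι K : Type*} [TopologicalSpace K] [CompactSpace K]
    (U : Ultrafilter ι) (u : ι → K) : ∃ y, Tendsto u U (𝓝 y) :=
  ⟨_, (U.map u).le_nhds_lim⟩

variable {Γ X Z : Type*} [Group Γ] [MeasurableSpace X] {μ : Measure X}

lemma PMP.abs_measureReal_itinerary_sub_le [IsFiniteMeasure μ] (f : PMP Γ X μ) {n : ℕ}
    {C C' : X → Fin n} (hC : Measurable C) (hC' : Measurable C') {F : Set Γ} (hF : F.Finite)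
    (E : Set (F → Fin n)) :
    |μ.real (f.itinerary C ⁻¹' (F.domRestrict ⁻¹' E)) -
      μ.real (f.itinerary C' ⁻¹' (F.domRestrict ⁻¹' E))| ≤ F.ncard * μ.real {x | C x ≠ C' x} := by
  have hE := measurableSet_domRestrict_preimage hF E
  have hne : MeasurableSet {x | C x ≠ C' x} := (measurableSet_eq_fun hC hC').compl
  have := hF.fintype
  calc _ ≤ μ.real (symmDiff (f.itinerary C ⁻¹' (F.domRestrict ⁻¹' E))
          (f.itinerary C' ⁻¹' (F.domRestrict ⁻¹' E))) :=
        abs_measureReal_sub_le_measureReal_symmDiff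
          (f.measurable_itinerary hC hE).nullMeasurableSet
          (f.measurable_itinerary hC' hE).nullMeasurableSet
    _ ≤ μ.real (⋃ γ : F, f.act γ ⁻¹' {x | C x ≠ C' x}) := by
        refine measureReal_mono fun x hx => by_contra fun hagree => ?_
        have heq : F.domRestrict (f.itinerary C x) = F.domRestrict (f.itinerary C' x) :=
          funext fun γ => by_contra fun h => hagree (mem_iUnion.2 ⟨γ, h⟩)
        simp [mem_symmDiff, heq] at hx
    _ ≤ ∑ γ : F, μ.real (f.act γ ⁻¹' {x | C x ≠ C' x}) := measureReal_iUnion_fintype_le _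
    _ = ∑ _γ : F, μ.real {x | C x ≠ C' x} := Finset.sum_congr rfl fun γ _ => by
        rw [measureReal_def, (f.preserves γ).measure_preimage hne.nullMeasurableSet,
          measureReal_def]
    _ = F.ncard * μ.real {x | C x ≠ C' x} := by
        rw [Finset.sum_const, Finset.card_univ, fintypeCard_eq_ncard, nsmul_eq_mul]

/-- Right translation of configurations; the itinerary of `f.act δ x` is the translate by `δ` of
that of `x`. -/
def shift (δ : Γ) (y : Γ → Z) : Γ → Z := fun γ => y (γ * δ)

lemma continuous_shift [TopologicalSpace Z] (δ : Γ) : Continuous (shift (Z := Z) δ) :=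
  continuous_pi fun γ => continuous_apply (γ * δ)

lemma PMP.itinerary_act (f : PMP Γ X μ) (Ψ : X → Z) (δ : Γ) (x : X) :
    f.itinerary Ψ (f.act δ x) = shift δ (f.itinerary Ψ x) :=
  funext fun γ => congrArg Ψ (f.act_mul γ δ x).symm

/-- The shift action on configurations, equipped with an invariant measure `ν`. -/
def shiftPMP [MeasurableSpace Z] (ν : Measure (Γ → Z)) (hν : ∀ δ, MeasurePreserving (shift δ) ν ν) :
    PMP Γ (Γ → Z) ν where
  act := shift
  measurable δ := (hν δ).measurable
  preserves := hν
  act_one y := funext fun γ => congrArg y (mul_one γ)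
  act_mul γ₁ γ₂ y := funext fun γ => congrArg y (mul_assoc γ γ₁ γ₂).symm

/-- The distribution of the `Ψ`-itinerary of a `μ`-random point. -/
noncomputable def PMP.itineraryLaw [MeasurableSpace Z] [IsProbabilityMeasure μ] (f : PMP Γ X μ)
    {Ψ : X → Z} (hΨ : Measurable Ψ) : ProbabilityMeasure (Γ → Z) :=
  ⟨μ.map (f.itinerary Ψ),
    Measure.isProbabilityMeasure_map (f.measurable_itinerary hΨ).aemeasurable⟩

lemma PMP.measurePreserving_itinerary [MeasurableSpace Z] [IsProbabilityMeasure μ] (f : PMP Γ X μ)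
    {Ψ : X → Z} (hΨ : Measurable Ψ) :
    MeasurePreserving (f.itinerary Ψ) μ (f.itineraryLaw hΨ).toMeasure :=
  ⟨f.measurable_itinerary hΨ, rfl⟩

variable [Countable Γ] [IsProbabilityMeasure μ] {f : PMP Γ X μ}
  [TopologicalSpace Z] [SecondCountableTopology Z] [MeasurableSpace Z] [BorelSpace Z]
  {ι : Type*} {l : Filter ι} {Ψ : ι → X → Z} {hΨ : ∀ i, Measurable (Ψ i)}
  {ν : ProbabilityMeasure (Γ → Z)}

lemma measurePreserving_comp_of_tendsto [l.NeBot] {W : Type*} [TopologicalSpace W]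
    [TopologicalSpace.MetrizableSpace W] [SecondCountableTopology W] [MeasurableSpace W]
    [BorelSpace W] {π : Z → W} {ψ : X → W} (hψ : Measurable ψ)
    (hν : Tendsto (fun i => f.itineraryLaw (hΨ i)) l (𝓝 ν)) (hπ : Continuous π)
    (hπΨ : ∀ i x, π (Ψ i x) = ψ x) :
    MeasurePreserving (π ∘ ·) ν.toMeasure (f.itineraryLaw hψ).toMeasure := by
  have hcomp : Continuous (π ∘ · : (Γ → Z) → Γ → W) :=
    continuous_pi fun γ => hπ.comp (continuous_apply γ)
  have law_comp (i : ι) :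
      (f.itineraryLaw (hΨ i)).map hcomp.measurable.aemeasurable = f.itineraryLaw hψ := by
    refine Subtype.ext ((Measure.map_map hcomp.measurable (f.measurable_itinerary (hΨ i))).trans ?_)
    exact congrArg μ.map (funext fun x => funext fun γ => hπΨ i (f.act γ x))
  have hmap := ProbabilityMeasure.tendsto_map_of_tendsto_of_continuous _ ν hν hcomp
  simp only [law_comp] at hmap
  have hlimit : ν.map hcomp.measurable.aemeasurable = f.itineraryLaw hψ :=
    tendsto_nhds_unique hmap tendsto_const_nhds
  exact ⟨hcomp.measurable, congrArg ProbabilityMeasure.toMeasure hlimit⟩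

/-- The point of `X` whose `ψ`-code is the `π`-coordinate of the configuration `y` at the identity.
It exhibits `f` as a factor of limits of itinerary laws whose `π`-coordinate is the code `ψ`. -/
def readPoint {W : Type*} [MeasurableSpace W] (ψ : X ≃ᵐ W) (π : Z → W) (y : Γ → Z) : X :=
  ψ.symm (π (y 1))

lemma isFactorMap_readPoint [MeasurableEq X] [l.NeBot] {W : Type*} [TopologicalSpace W]
    [TopologicalSpace.MetrizableSpace W] [SecondCountableTopology W] [MeasurableSpace W]
    [BorelSpace W] {π : Z → W} {ψ : X ≃ᵐ W}
    (hν : Tendsto (fun i => f.itineraryLaw (hΨ i)) l (𝓝 ν))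
    (hinv : ∀ δ, MeasurePreserving (shift δ) ν.toMeasure ν) (hπ : Continuous π)
    (hπΨ : ∀ i x, π (Ψ i x) = ψ x) :
    IsFactorMap (shiftPMP ν.toMeasure hinv) f (readPoint ψ π) := by
  have hcode := measurePreserving_comp_of_tendsto ψ.measurable hν hπ hπΨ
  have hdecode (γ : Γ) : Measurable fun z : Γ → W => ψ.symm (z γ) :=
    ψ.symm.measurable.comp (measurable_pi_apply γ)
  have decode_itinerary (x : X) (γ : Γ) : ψ.symm (f.itinerary ψ x γ) = f.act γ x :=
    ψ.symm_apply_apply _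
  have hread : MeasurePreserving (fun z : Γ → W => ψ.symm (z 1)) (f.itineraryLaw ψ.measurable) μ :=
    ⟨hdecode 1, (Measure.map_map (hdecode 1) (f.measurable_itinerary ψ.measurable)).trans <| by
      simp [Function.comp_def, decode_itinerary, f.act_one]⟩
  refine ⟨hread.comp hcode, ?_⟩
  have hequivariant : ∀ᵐ z ∂(f.itineraryLaw ψ.measurable).toMeasure,
      ∀ γ, ψ.symm (z γ) = f.act γ (ψ.symm (z 1)) := by
    refine ae_all_iff.2 fun γ => (ae_map_iff (f.measurable_itinerary ψ.measurable).aemeasurable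
      (measurableSet_eq_fun (hdecode γ) ((f.measurable γ).comp (hdecode 1)))).2 ?_
    exact ae_of_all _ fun x => by
      simp only [Function.comp_apply, decode_itinerary, f.act_one]
  filter_upwards [hcode.quasiMeasurePreserving.ae hequivariant] with y hy γ
  exact (congrArg (fun δ => ψ.symm (π (y δ))) (one_mul γ)).trans (hy γ)

variable [TopologicalSpace.MetrizableSpace Z]

lemma measurePreserving_shift_of_tendsto [l.NeBot]
    (hν : Tendsto (fun i => f.itineraryLaw (hΨ i)) l (𝓝 ν)) (δ : Γ) :
    MeasurePreserving (shift δ) ν.toMeasure ν := by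
  have hshift : Continuous (shift (Z := Z) δ) := continuous_shift δ
  have law_invariant (i : ι) :
      (f.itineraryLaw (hΨ i)).map hshift.measurable.aemeasurable = f.itineraryLaw (hΨ i) := by
    have hcomm : Function.Semiconj (f.itinerary (Ψ i)) (f.act δ) (shift δ) :=
      f.itinerary_act (Ψ i) δ
    exact Subtype.ext ((f.measurePreserving_itinerary (hΨ i)).of_semiconj (f.preserves δ) hcomm
      hshift.measurable).map_eq
  have hmap := ProbabilityMeasure.tendsto_map_of_tendsto_of_continuous _ ν hν hshift
  simp only [law_invariant] at hmap
  have hfixed : ν.map hshift.measurable.aemeasurable = ν := tendsto_nhds_unique hmap hν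
  exact ⟨hshift.measurable, congrArg ProbabilityMeasure.toMeasure hfixed⟩

lemma tendsto_measure_itinerary_preimage_of_isClopen
    (hν : Tendsto (fun i => f.itineraryLaw (hΨ i)) l (𝓝 ν)) {s : Set (Γ → Z)} (hs : IsClopen s) :
    Tendsto (fun i => μ (f.itinerary (Ψ i) ⁻¹' s)) l (𝓝 (ν.toMeasure s)) := by
  have hfrontier : ν.toMeasure (frontier s) = 0 := by rw [hs.frontier_eq, measure_empty]
  refine (ProbabilityMeasure.tendsto_measure_of_null_frontier_of_tendsto' hν hfrontier).congr
    fun i => ?_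
  rw [(f.measurePreserving_itinerary (hΨ i)).measure_preimage
    hs.isOpen.measurableSet.nullMeasurableSet]

lemma tendsto_measureReal_itinerary_preimage_of_isClopen
    (hν : Tendsto (fun i => f.itineraryLaw (hΨ i)) l (𝓝 ν)) {s : Set (Γ → Z)} (hs : IsClopen s) :
    Tendsto (fun i => μ.real (f.itinerary (Ψ i) ⁻¹' s)) l (𝓝 (ν.toMeasure.real s)) :=
  (ENNReal.tendsto_toReal (measure_ne_top ν.toMeasure s)).comp
    (tendsto_measure_itinerary_preimage_of_isClopen hν hs)

lemma properlySatisfies_shiftPMP_of_tendsto [l.NeBot]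
    (hν : Tendsto (fun i => f.itineraryLaw (hΨ i)) l (𝓝 ν))
    (hinv : ∀ δ, MeasurePreserving (shift δ) ν.toMeasure ν) {S : Finset Γ} {r k : ℕ}
    {L : Set (cayleyBall S r → Fin k)} {c : Z → Fin k} (hc : Continuous c)
    (hcL : Tendsto (fun i => μ.real {x | ballColoring f S r k (c ∘ Ψ i) x ∈ L}) l (𝓝 1)) :
    ProperlySatisfies (shiftPMP ν.toMeasure hinv) S L := by
  have := (finite_cayleyBall S r).to_subtype
  let pattern (y : Γ → Z) (γ : cayleyBall S r) : Fin k := c (y γ)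
  have hpattern : Continuous pattern := continuous_pi fun γ => hc.comp (continuous_apply _)
  have hlim := tendsto_measureReal_itinerary_preimage_of_isClopen hν
    ((isClopen_discrete L).preimage hpattern)
  have hone : ν.toMeasure.real (pattern ⁻¹' L) = 1 := tendsto_nhds_unique hlim hcL
  refine ⟨fun y => c (y 1), (hc.comp (continuous_apply 1)).measurable, ?_⟩
  have hball (y : Γ → Z) :
      ballColoring (shiftPMP ν.toMeasure hinv) S r k (fun y => c (y 1)) y = pattern y :=
    funext fun γ => congrArg (fun γ => c (y γ)) (one_mul γ.1)
  simp only [hball]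
  exact (ENNReal.toReal_eq_one_iff _).1 hone

lemma measure_singleton_le_of_tendsto [CompactSpace Z] [TotallyDisconnectedSpace Z] [l.NeBot]
    (hν : Tendsto (fun i => f.itineraryLaw (hΨ i)) l (𝓝 ν)) {x : X} {y : Γ → Z}
    (hy : Tendsto (fun i => f.itinerary (Ψ i) x) l (𝓝 y)) :
    μ {x} ≤ ν.toMeasure {y} := by
  rw [({y} : Set (Γ → Z)).measure_eq_iInf_isOpen ν.toMeasure]
  refine le_iInf₂ fun U hyU => le_iInf fun hU => ?_
  obtain ⟨V, hV, hyV, hVU⟩ := compact_exists_isClopen_in_isOpen hU (singleton_subset_iff.1 hyU)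
  refine (ge_of_tendsto (tendsto_measure_itinerary_preimage_of_isClopen hν hV) ?_).trans
    (measure_mono hVU)
  filter_upwards [hy (hV.isOpen.mem_nhds hyV)] with i hi
  exact measure_mono (singleton_subset_iff.2 hi)

theorem approximatesItineraries_shiftPMP_of_tendsto [CompactSpace Z] [TotallyDisconnectedSpace Z]
    [l.NeBot] (hν : Tendsto (fun i => f.itineraryLaw (hΨ i)) l (𝓝 ν))
    (hinv : ∀ δ, MeasurePreserving (shift δ) ν.toMeasure ν) :
    ApproximatesItineraries f (shiftPMP ν.toMeasure hinv) := by
  intro n C hC F hF ε hε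
  let g := shiftPMP ν.toMeasure hinv
  have := hF.to_subtype
  obtain ⟨C', hC', hC'C⟩ := exists_continuous_measureReal_ne_le ν.toMeasure hC
    (show 0 < ε / 2 / (F.ncard + 1) by positivity)
  have hperturb (E : Set (F → Fin n)) :
      |ν.toMeasure.real (g.itinerary C' ⁻¹' (F.domRestrict ⁻¹' E)) -
        ν.toMeasure.real (g.itinerary C ⁻¹' (F.domRestrict ⁻¹' E))| ≤ ε / 2 := calc
    _ ≤ F.ncard * ν.toMeasure.real {y | C' y ≠ C y} :=
      g.abs_measureReal_itinerary_sub_le hC'.measurable hC hF E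
    _ ≤ F.ncard * (ε / 2 / (F.ncard + 1)) := by gcongr
    _ ≤ ε / 2 := by
      rw [mul_div_left_comm]
      exact mul_le_of_le_one_right (half_pos hε).le ((div_le_one (by positivity)).2 (by simp))
  have hcont : Continuous fun y => F.domRestrict (g.itinerary C' y) :=
    continuous_pi fun γ => hC'.comp (continuous_shift _)
  have hclose : ∀ᶠ i in l, ∀ E : Set (F → Fin n),
      |μ.real (f.itinerary (Ψ i) ⁻¹' (g.itinerary C' ⁻¹' (F.domRestrict ⁻¹' E))) -
        ν.toMeasure.real (g.itinerary C' ⁻¹' (F.domRestrict ⁻¹' E))| ≤ ε / 2 :=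
    eventually_all.2 fun E => (tendsto_measureReal_itinerary_preimage_of_isClopen hν
      ((isClopen_discrete E).preimage hcont)).eventually
        (Metric.closedBall_mem_nhds _ (half_pos hε))
  obtain ⟨i, hi⟩ := hclose.exists
  have hcomp : f.itinerary (C' ∘ f.itinerary (Ψ i)) = g.itinerary C' ∘ f.itinerary (Ψ i) :=
    funext fun x => funext fun γ => congrArg C' (f.itinerary_act (Ψ i) γ x)
  refine ⟨C' ∘ f.itinerary (Ψ i), hC'.measurable.comp (f.measurable_itinerary (hΨ i)), fun E => ?_⟩
  rw [hcomp, preimage_comp]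
  exact (abs_sub_le _ _ _).trans ((add_le_add (hi E) (hperturb E)).trans_eq (add_halves ε))

lemma exists_readPoint_eq_and_measure_singleton_le_of_tendsto [CompactSpace Z]
    [TotallyDisconnectedSpace Z] {U : Ultrafilter ι} {W : Type*} [TopologicalSpace W] [T2Space W]
    [MeasurableSpace W] {π : Z → W} {ψ : X ≃ᵐ W}
    (hν : Tendsto (fun i => f.itineraryLaw (hΨ i)) U (𝓝 ν)) (hπ : Continuous π)
    (hπΨ : ∀ i x, π (Ψ i x) = ψ x) (x : X) :
    ∃ y, readPoint ψ π y = x ∧ μ {x} ≤ ν.toMeasure {y} := by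
  obtain ⟨y, hy⟩ := exists_tendsto_of_ultrafilter U fun i => f.itinerary (Ψ i) x
  have hread : Tendsto (fun i => π (Ψ i (f.act 1 x))) U (𝓝 (π (y 1))) :=
    (hπ.tendsto _).comp (tendsto_pi_nhds.1 hy 1)
  simp only [hπΨ, f.act_one] at hread
  refine ⟨y, ?_, measure_singleton_le_of_tendsto hν hy⟩
  rw [readPoint, ← tendsto_nhds_unique tendsto_const_nhds hread, ψ.symm_apply_apply]

end ShiftLimits

section Rigidity

variable {Γ X : Type*} [Group Γ] [Countable Γ] [MeasurableSpace X] [StandardBorelSpace X]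
  {μ : Measure X} [IsProbabilityMeasure μ]

theorem exists_approximatesItineraries_and_properlySatisfies_of_continuous [Uncountable X]
    (f : PMP Γ X μ) {Z W : Type*} [TopologicalSpace Z] [CompactSpace Z]
    [TopologicalSpace.MetrizableSpace Z] [TotallyDisconnectedSpace Z] [MeasurableSpace Z]
    [BorelSpace Z] [TopologicalSpace W] [TopologicalSpace.MetrizableSpace W]
    [SecondCountableTopology W] [MeasurableSpace W] [BorelSpace W] {π : Z → W} (hπ : Continuous π)
    (ψ : X ≃ᵐ W) {Ψ : ℕ → X → Z} (hΨ : ∀ n, Measurable (Ψ n)) (hπΨ : ∀ n x, π (Ψ n x) = ψ x) :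
    ∃ g : PMP Γ X μ, ApproximatesItineraries f g ∧ ApproximatesItineraries g f ∧
      ∀ (S : Finset Γ) (r k : ℕ) (L : Set (cayleyBall S r → Fin k)) (c : Z → Fin k), Continuous c →
        Tendsto (fun n => μ.real {x | ballColoring f S r k (c ∘ Ψ n) x ∈ L}) atTop (𝓝 1) →
        ProperlySatisfies g S L := by
  have : PolishSpace Z := by
    let := TopologicalSpace.metrizableSpaceMetric Z
    infer_instance
  have hΨ₀ : Function.Injective (Ψ 0) := fun x y hxy =>
    ψ.injective (by rw [← hπΨ 0, hxy, hπΨ])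
  have : Uncountable (Γ → Z) := (Function.const_injective.comp hΨ₀).uncountable
  obtain ⟨ν, hν⟩ := exists_tendsto_of_ultrafilter (hyperfilter ℕ) fun n => f.itineraryLaw (hΨ n)
  have hinv := measurePreserving_shift_of_tendsto hν
  have hread := isFactorMap_readPoint hν hinv hπ hπΨ
  obtain ⟨e, he⟩ := exists_measurePreserving_equiv_of_forall_atom_lift hread.measurePreserving
    fun x _ => exists_readPoint_eq_and_measure_singleton_le_of_tendsto hν hπ hπΨ x
  let g := shiftPMP ν.toMeasure hinv
  have he_factor : IsFactorMap (g.transport e he) g e := g.isFactorMap_transport e he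
  have he_factor_symm : IsFactorMap g (g.transport e he) e.symm := g.isFactorMap_transport_symm e he
  refine ⟨g.transport e he, ?_, ?_, fun S r k L c hc hL => he_factor.properlySatisfies ?_⟩
  · exact (approximatesItineraries_shiftPMP_of_tendsto hν hinv).trans
      he_factor_symm.approximatesItineraries
  · exact he_factor.approximatesItineraries.trans hread.approximatesItineraries
  · exact properlySatisfies_shiftPMP_of_tendsto hν hinv hc (hL.mono_left Nat.hyperfilter_le_atTop)

theorem exists_approximatesItineraries_and_properlySatisfies_of_tendsto [Uncountable X]
    (f : PMP Γ X μ) {ι : Type*} [Countable ι] {k : ι → ℕ} {φ : (p : ι) → ℕ → X → Fin (k p)}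
    (hφ : ∀ p n, Measurable (φ p n)) :
    ∃ g : PMP Γ X μ, ApproximatesItineraries f g ∧ ApproximatesItineraries g f ∧
      ∀ (p : ι) (S : Finset Γ) (r : ℕ) (L : Set (cayleyBall S r → Fin (k p))),
        Tendsto (fun n => μ.real {x | ballColoring f S r (k p) (φ p n) x ∈ L}) atTop (𝓝 1) →
        ProperlySatisfies g S L := by
  let ψ : X ≃ᵐ (ℕ → Bool) := PolishSpace.measurableEquivNatBoolOfNotCountable not_countable
  let Ψ (n : ℕ) (x : X) : (ℕ → Bool) × ∀ p, Fin (k p) := (ψ x, fun p => φ p n x)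
  have hΨ (n : ℕ) : Measurable (Ψ n) :=
    ψ.measurable.prodMk (measurable_pi_lambda _ fun p => hφ p n)
  obtain ⟨g, hfg, hgf, hg⟩ := exists_approximatesItineraries_and_properlySatisfies_of_continuous f
    (π := Prod.fst) (Z := (ℕ → Bool) × ∀ p, Fin (k p)) continuous_fst ψ hΨ fun _ _ => rfl
  exact ⟨g, hfg, hgf, fun p S r L hL =>
    hg S r (k p) L (fun z => z.2 p) ((continuous_apply p).comp continuous_snd) hL⟩

theorem exists_weaklyEquivalent_isCombinatoriallyRigid_of_uncountable [Uncountable X]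
    (f : PMP Γ X μ) :
    ∃ g : PMP Γ X μ, WeaklyEquivalent f g ∧ ∀ S : Finset Γ, IsCombinatoriallyRigid g S := by
  have countable_rules (S : Finset Γ) (r k : ℕ) : Countable (Set (cayleyBall S r → Fin k)) := by
    have := (finite_cayleyBall S r).to_subtype
    infer_instance
  let Rule := {p : Σ (S : Finset Γ) (r k : ℕ), Set (cayleyBall S r → Fin k) //
    AlmostSatisfies f p.1 p.2.2.2}
  choose φ hφ hφL using fun p : Rule => p.2.exists_seq_tendsto
  obtain ⟨g, hfg, hgf, hg⟩ :=
    exists_approximatesItineraries_and_properlySatisfies_of_tendsto f hφ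
  refine ⟨g, ⟨hfg.weaklyContains, hgf.weaklyContains⟩, fun S r k L hL => ?_⟩
  let rule : Rule := ⟨⟨S, r, k, L⟩, hfg.almostSatisfies hL⟩
  exact hg rule S r L (hφL rule)

theorem exists_combinatorially_rigid_weakly_equivalent_general (f : PMP Γ X μ) :
    ∃ g : PMP Γ X μ, WeaklyEquivalent f g ∧ ∀ S : Finset Γ, IsCombinatoriallyRigid g S := by
  by_cases hX : Countable X
  · exact ⟨f, ⟨.refl f, .refl f⟩, isCombinatoriallyRigid_of_countable f⟩
  · rw [not_countable_iff] at hX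
    exact exists_weaklyEquivalent_isCombinatoriallyRigid_of_uncountable f

end Rigidity

theorem exists_combinatorially_rigid_weakly_equivalent
    {Γ X : Type} [Group Γ] [Countable Γ] (S : Finset Γ)
    (hS : Subgroup.closure (S : Set Γ) = ⊤)
    [MeasurableSpace X] [StandardBorelSpace X]
    (μ : Measure X) [IsProbabilityMeasure μ]
    (f : PMP Γ X μ) (hfree : IsFreeAction f) :
    ∃ g : PMP Γ X μ, WeaklyEquivalent f g ∧
      ∀ r k : ℕ, 1 ≤ r → 1 ≤ k → ∀ L : Set (cayleyBall S r → Fin k),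
        AlmostSatisfies g S L → ProperlySatisfies g S L := by
  obtain ⟨g, hfg, hg⟩ := exists_combinatorially_rigid_weakly_equivalent_general f
  exact ⟨g, hfg, fun r k _ _ => hg S r k⟩
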